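/- Consider the APMD iteration: given a policy π_k with full support, τ_k ≥ 0, η_k > 0, set π_{k+1}(·|s) = argmin_{p∈Δ_A} { η_k[⟨Q_{τ_k}^{π_k}(s,·), p⟩ + h^p(s) + τ_k D_{π_0}^p(s)] + D_{π_k}^p(s) } for every s. Then for every s ∈ S: ⟨Q_{τ_k}^{π_k}(s,·), π_{k+1}(·|s) − π_k(·|s)⟩ + h^{π_{k+1}}(s) − h^{π_k}(s) + τ_k[D_{π_0}^{π_{k+1}}(s) − D_{π_0}^{π_k}(s)] ≥ V_{τ_k}^{π_{k+1}}(s) − V_{τ_k}^{π_k}(s). -/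

import Mathlib

open Finset

noncomputable section

namespace RL

/-- The probability simplex on a finite set `A`. -/
def simplex (A : Type*) [Fintype A] : Set (A → ℝ) :=
  {p | (∀ a, 0 ≤ p a) ∧ ∑ a, p a = 1}

/-- A policy assigns to each state a distribution over actions. -/
def IsPolicy {S A : Type*} [Fintype A] (π : S → A → ℝ) : Prop :=
  ∀ s, π s ∈ simplex A

/-- `KL q p` is the Bregman (KL) divergence `D_q^p = ∑_a p a * log (p a / q a)`. -/
def KL {A : Type*} [Fintype A] (q p : A → ℝ) : ℝ :=
  ∑ a, p a * Real.log (p a / q a)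

/-- The state transition matrix `P^π` induced by policy `π`. -/
def Pmat {S A : Type*} [Fintype A] (P : S → A → S → ℝ) (π : S → A → ℝ) :
    Matrix S S ℝ :=
  Matrix.of fun s s' => ∑ a, π s a * P s a s'

/-- `V` satisfies the Bellman equation for policy `π`, cost `c`, regularizer `h`,
and discount factor `γ`. -/
def IsValue {S A : Type*} [Fintype S] [Fintype A] (P : S → A → S → ℝ)
    (c : S → A → ℝ) (h : S → (A → ℝ) → ℝ) (γ : ℝ) (π : S → A → ℝ)
    (V : S → ℝ) : Prop :=
  ∀ s, V s = (∑ a, π s a * c s a) + h s (π s)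
    + γ * ∑ s', (∑ a, π s a * P s a s') * V s'

/-- The action-value function `Q^π` determined by a state-value function `V`. -/
def Qfun {S A : Type*} [Fintype S] (P : S → A → S → ℝ) (c : S → A → ℝ)
    (h : S → (A → ℝ) → ℝ) (γ : ℝ) (π : S → A → ℝ) (V : S → ℝ) :
    S → A → ℝ :=
  fun s a => c s a + h s (π s) + γ * ∑ s', P s a s' * V s'

/-- The discounted state-visitation distribution `d_s^π(s')`. -/
def dvisit {S A : Type*} [Fintype S] [Fintype A] [DecidableEq S]
    (P : S → A → S → ℝ) (γ : ℝ) (π : S → A → ℝ) (s s' : S) : ℝ :=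
  (1 - γ) * ∑' t : ℕ, γ ^ t * ((Pmat P π) ^ t) s s'

/-- `next` minimizes `p ↦ η * (⟨G, p⟩ + hreg p) + KL base p` over the simplex. -/
def IsProxStep {A : Type*} [Fintype A] (G : A → ℝ) (hreg : (A → ℝ) → ℝ)
    (η : ℝ) (base next : A → ℝ) : Prop :=
  next ∈ simplex A ∧ ∀ p ∈ simplex A,
    η * ((∑ a, G a * next a) + hreg next) + KL base next ≤
      η * ((∑ a, G a * p a) + hreg p) + KL base p

/-- `h` is convex with modulus `μ` relative to KL, with subgradients `h'`. -/
def ConvexReg {S A : Type*} [Fintype A] (h : S → (A → ℝ) → ℝ)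
    (h' : S → (A → ℝ) → A → ℝ) (μ : ℝ) : Prop :=
  ∀ s : S, ∀ p ∈ simplex A, ∀ q ∈ simplex A,
    μ * KL q p ≤ h s p - (h s q + ∑ a, h' s q a * (p a - q a))

/-!
Let `h` be any regularizer and let `δ s = ⟨Q^π(s,·), π'(·|s) - π(·|s)⟩ + h^{π'}(s) - h^π(s)`.
Subtracting the two Bellman equations gives `V^{π'} - V^π = δ + γ P^{π'} (V^{π'} - V^π)`. Comparing
the proximal step `π'` with the competitor `π` gives `δ ≤ 0`, because `D_π^{π'} ≥ 0 = D_π^π`. Hence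
`V^{π'} - V^π ≤ γ P^{π'} (V^{π'} - V^π)`, and evaluating at a maximizing state shows
`V^{π'} - V^π ≤ 0`. Put back into the identity, this bounds `V^{π'} - V^π` by `δ`.
-/

section KullbackLeibler

variable {A : Type*} [Fintype A] {p q : A → ℝ}

theorem KL_self (q : A → ℝ) : KL q q = 0 :=
  sum_eq_zero fun a _ => by
    rcases eq_or_ne (q a) 0 with hqa | hqa <;> simp [hqa]

theorem sum_sub_sum_le_KL (hq : ∀ a, 0 < q a) (hp : ∀ a, 0 ≤ p a) :
    ∑ a, p a - ∑ a, q a ≤ KL q p := by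
  rw [KL, ← sum_sub_distrib]
  refine sum_le_sum fun a _ => ?_
  have hnonneg : 0 ≤ q a * InformationTheory.klFun (p a / q a) :=
    mul_nonneg (hq a).le (InformationTheory.klFun_nonneg (div_nonneg (hp a) (hq a).le))
  have hklFun : q a * InformationTheory.klFun (p a / q a) =
      p a * Real.log (p a / q a) + q a - p a := by
    have hqa := (hq a).ne'
    rw [InformationTheory.klFun_apply]
    field_simp
  linarith

theorem KL_nonneg (hq : q ∈ simplex A) (hqpos : ∀ a, 0 < q a) (hp : p ∈ simplex A) :
    0 ≤ KL q p := by
  simpa [hp.2, hq.2] using sum_sub_sum_le_KL hqpos hp.1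

theorem IsProxStep.sum_mul_sub_add_nonpos {G : A → ℝ} {hreg : (A → ℝ) → ℝ} {η : ℝ}
    {base next : A → ℝ} (hstep : IsProxStep G hreg η base next) (hη : 0 < η)
    (hbase : base ∈ simplex A) (hbasepos : ∀ a, 0 < base a) :
    ∑ a, G a * (next a - base a) + (hreg next - hreg base) ≤ 0 := by
  have hmin := hstep.2 base hbase
  rw [KL_self, add_zero] at hmin
  have hKL : 0 ≤ KL base next := KL_nonneg hbase hbasepos hstep.1
  have hobj : ∑ a, G a * next a + hreg next ≤ ∑ a, G a * base a + hreg base :=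
    le_of_mul_le_mul_left (by linarith) hη
  simp only [mul_sub, sum_sub_distrib]
  linarith

end KullbackLeibler

section MaximumPrinciple

open Matrix

theorem mulVec_nonpos {m n R : Type*} [Fintype n] [NonUnitalNonAssocRing R] [PartialOrder R]
    [IsOrderedAddMonoid R] [PosMulMono R] {M : Matrix m n R} {x : n → R}
    (hM : ∀ i j, 0 ≤ M i j) (hx : x ≤ 0) : M *ᵥ x ≤ 0 := fun i =>
  sum_nonpos fun j _ => mul_nonpos_of_nonneg_of_nonpos (hM i j) (hx j)

theorem nonpos_of_le_smul_mulVec {S R : Type*} [Fintype S] [Ring R] [LinearOrder R]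
    [IsStrictOrderedRing R] {M : Matrix S S R} {x : S → R} {γ : R} (hγ0 : 0 ≤ γ) (hγ1 : γ < 1)
    (hM0 : ∀ s s', 0 ≤ M s s') (hM1 : ∀ s, ∑ s', M s s' ≤ 1) (hx : x ≤ γ • M *ᵥ x) :
    x ≤ 0 := by
  intro s
  have : Nonempty S := ⟨s⟩
  obtain ⟨m, hm⟩ := Finite.exists_max x
  refine (hm s).trans (le_of_not_gt fun (hpos : 0 < x m) => ?_)
  have hMx : (M *ᵥ x) m ≤ x m :=
    calc (M *ᵥ x) m ≤ ∑ s', M m s' * x m :=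
          sum_le_sum fun s' _ => mul_le_mul_of_nonneg_left (hm s') (hM0 m s')
      _ = (∑ s', M m s') * x m := (sum_mul ..).symm
      _ ≤ x m := mul_le_of_le_one_left hpos.le (hM1 m)
  have hlt : x m < x m :=
    calc x m ≤ γ * (M *ᵥ x) m := hx m
      _ ≤ γ * x m := mul_le_mul_of_nonneg_left hMx hγ0
      _ < x m := mul_lt_of_lt_one_left hpos hγ1
  exact hlt.false

end MaximumPrinciple

section PolicyImprovement

open Matrix

variable {S A : Type*} [Fintype A] {P : S → A → S → ℝ} {π π' : S → A → ℝ}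

theorem Pmat_nonneg (hP0 : ∀ s a s', 0 ≤ P s a s') (hπ : IsPolicy π) (s s' : S) :
    0 ≤ Pmat P π s s' :=
  sum_nonneg fun a _ => mul_nonneg ((hπ s).1 a) (hP0 s a s')

variable [Fintype S] {c : S → A → ℝ} {h : S → (A → ℝ) → ℝ} {γ : ℝ} {V V' : S → ℝ}

theorem sum_Pmat_le_one (hP1 : ∀ s a, ∑ s', P s a s' ≤ 1) (hπ : IsPolicy π) (s : S) :
    ∑ s', Pmat P π s s' ≤ 1 :=
  calc ∑ s', ∑ a, π s a * P s a s' = ∑ a, π s a * ∑ s', P s a s' := by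
        rw [sum_comm]
        simp only [mul_sum]
    _ ≤ ∑ a, π s a := sum_le_sum fun a _ => mul_le_of_le_one_right ((hπ s).1 a) (hP1 s a)
    _ = 1 := (hπ s).2

/-- The regularized advantage of `π'` over `π` at `s`, namely
`⟨Q^π(s,·), π'(·|s) - π(·|s)⟩ + h^{π'}(s) - h^π(s)`, where `V` stands for the value function of `π`.
It is the term driving the Bellman recursion for the difference of the two value functions. -/
def advantage (P : S → A → S → ℝ) (c : S → A → ℝ) (h : S → (A → ℝ) → ℝ) (γ : ℝ)
    (π π' : S → A → ℝ) (V : S → ℝ) (s : S) : ℝ :=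
  ∑ a, Qfun P c h γ π V s a * (π' s a - π s a) + (h s (π' s) - h s (π s))

variable (P π c h γ V) in
theorem sum_Qfun_mul {p : A → ℝ} (hp : ∑ a, p a = 1) (s : S) :
    ∑ a, Qfun P c h γ π V s a * p a =
      ∑ a, p a * c s a + h s (π s) + γ * ∑ s', (∑ a, p a * P s a s') * V s' := by
  have hconst : ∑ a, p a * h s (π s) = h s (π s) := by
    rw [← sum_mul, hp, one_mul]
  have htransition : ∑ s', (∑ a, p a * P s a s') * V s' = ∑ a, p a * ∑ s', P s a s' * V s' := by
    simp only [sum_mul, mul_sum, mul_assoc]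
    exact sum_comm
  calc ∑ a, Qfun P c h γ π V s a * p a
      = ∑ a, (p a * c s a + p a * h s (π s) + γ * (p a * ∑ s', P s a s' * V s')) :=
        sum_congr rfl fun a _ => by rw [Qfun]; ring
    _ = ∑ a, p a * c s a + h s (π s) + γ * ∑ s', (∑ a, p a * P s a s') * V s' := by
        rw [sum_add_distrib, sum_add_distrib, hconst, htransition, mul_sum]

theorem IsValue.sum_Qfun_mul_eq (hV : IsValue P c h γ π V) (hπ : IsPolicy π) (s : S) :
    ∑ a, Qfun P c h γ π V s a * π s a = V s :=
  (sum_Qfun_mul P π c h γ V (hπ s).2 s).trans (hV s).symm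

theorem IsValue.sub_eq_advantage_add (hV : IsValue P c h γ π V) (hV' : IsValue P c h γ π' V')
    (hπ : IsPolicy π) (hπ' : IsPolicy π') :
    V' - V = advantage P c h γ π π' V + γ • Pmat P π' *ᵥ (V' - V) := by
  funext s
  have hQπ := hV.sum_Qfun_mul_eq hπ s
  have hQπ' := sum_Qfun_mul P π c h γ V (hπ' s).2 s
  have hV's := hV' s
  simp only [advantage, mulVec, dotProduct, Pmat, of_apply, mul_sub, sum_sub_distrib, Pi.add_apply,
    Pi.sub_apply, Pi.smul_apply, smul_eq_mul]
  linarith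

theorem IsValue.sub_le_advantage (hP0 : ∀ s a s', 0 ≤ P s a s')
    (hP1 : ∀ s a, ∑ s', P s a s' ≤ 1) (hγ0 : 0 ≤ γ) (hγ1 : γ < 1)
    (hV : IsValue P c h γ π V) (hV' : IsValue P c h γ π' V')
    (hπ : IsPolicy π) (hπ' : IsPolicy π') (hadv : advantage P c h γ π π' V ≤ 0) :
    V' - V ≤ advantage P c h γ π π' V := by
  have hrec := hV.sub_eq_advantage_add hV' hπ hπ'
  have himprove : V' - V ≤ 0 :=
    nonpos_of_le_smul_mulVec hγ0 hγ1 (Pmat_nonneg hP0 hπ') (sum_Pmat_le_one hP1 hπ')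
      (hrec.trans_le (add_le_of_nonpos_left hadv))
  have hfuture : γ • Pmat P π' *ᵥ (V' - V) ≤ 0 :=
    smul_nonpos_of_nonneg_of_nonpos hγ0 (mulVec_nonpos (Pmat_nonneg hP0 hπ') himprove)
  exact hrec.trans_le (add_le_of_nonpos_right hfuture)

theorem apmd_one_step_general (hP0 : ∀ s a s', 0 ≤ P s a s')
    (hP1 : ∀ s a, ∑ s', P s a s' ≤ 1) (hγ0 : 0 ≤ γ) (hγ1 : γ < 1) {η : ℝ} (hη : 0 < η)
    (hπ : IsPolicy π) (hπpos : ∀ s a, 0 < π s a)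
    (hV : IsValue P c h γ π V) (hV' : IsValue P c h γ π' V')
    (hstep : ∀ s, IsProxStep (Qfun P c h γ π V s) (h s) η (π s) (π' s)) (s : S) :
    V' s - V s ≤
      ∑ a, Qfun P c h γ π V s a * (π' s a - π s a) + (h s (π' s) - h s (π s)) :=
  hV.sub_le_advantage hP0 hP1 hγ0 hγ1 hV' hπ (fun s => (hstep s).1)
    (fun s => (hstep s).sum_mul_sub_add_nonpos hη (hπ s) (hπpos s)) s

end PolicyImprovement

/-- one step of the APMD method, where `π_{k+1}(·|s)` minimizes
`p ↦ η_k [⟨Q_{τ_k}^{π_k}(s,·), p⟩ + h^p(s) + τ_k D_{π_0}^p(s)] + D_{π_k}^p(s)`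
over the simplex, satisfies for every state `s`:
`⟨Q_{τ_k}^{π_k}(s,·), π_{k+1}(·|s) - π_k(·|s)⟩ + h^{π_{k+1}}(s) - h^{π_k}(s)
  + τ_k [D_{π_0}^{π_{k+1}}(s) - D_{π_0}^{π_k}(s)]
  ≥ V_{τ_k}^{π_{k+1}}(s) - V_{τ_k}^{π_k}(s)`. -/
theorem apmd_one_step {S A : Type*} [Fintype S] [Fintype A]
    [Nonempty S] [Nonempty A]
    (P : S → A → S → ℝ) (hP0 : ∀ s a s', 0 ≤ P s a s')
    (hP1 : ∀ s a, ∑ s', P s a s' = 1)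
    (c : S → A → ℝ) (γ : ℝ) (hγ0 : 0 < γ) (hγ1 : γ < 1)
    (h : S → (A → ℝ) → ℝ) (h' : S → (A → ℝ) → A → ℝ)
    (hconv : ConvexReg h h' 0)
    (π0 : S → A → ℝ) (hπ0 : IsPolicy π0) (hπ0pos : ∀ s a, 0 < π0 s a)
    (τk : ℝ) (hτk : 0 ≤ τk) (ηk : ℝ) (hηk : 0 < ηk)
    (πk : S → A → ℝ) (hπk : IsPolicy πk) (hπkpos : ∀ s a, 0 < πk s a)
    (πk1 : S → A → ℝ)
    (Vk Vk1 : S → ℝ)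
    (hVk : IsValue P c (fun s p => h s p + τk * KL (π0 s) p) γ πk Vk)
    (hVk1 : IsValue P c (fun s p => h s p + τk * KL (π0 s) p) γ πk1 Vk1)
    (hstep : ∀ s, IsProxStep
      (Qfun P c (fun s' p => h s' p + τk * KL (π0 s') p) γ πk Vk s)
      (fun p => h s p + τk * KL (π0 s) p) ηk (πk s) (πk1 s)) :
    ∀ s, Vk1 s - Vk s ≤
      (∑ a, Qfun P c (fun s' p => h s' p + τk * KL (π0 s') p) γ πk Vk s a
          * (πk1 s a - πk s a))
        + (h s (πk1 s) - h s (πk s))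
        + τk * (KL (π0 s) (πk1 s) - KL (π0 s) (πk s)) := by
  intro s
  linarith [apmd_one_step_general hP0 (fun s a => (hP1 s a).le) hγ0.le hγ1 hηk hπk hπkpos hVk hVk1
    hstep s]

end RL
end
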